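/- Bound for the error term ξ₃: Assume p(ρ) = kρ^γ with k > 0, γ ≥ 1. Let (ρ,n) ∈ L¹_loc((0,∞)×ℝ)² with ρ ≥ 0 a.e., and let (ρ̄,n̄) ∈ C¹((0,∞)×ℝ)² with inf ρ̄ > 0. Then pointwise a.e. the error term ξ₃ = −(ρ − ρ̄) h″(ρ̄) R̄₁, where R̄₁ = ρ̄_τ − (y/2)ρ̄_y + n̄_y, satisfies |ξ₃| ≤ (2γ|R̄₁|/ρ̄) h(ρ|ρ̄) + ρ̄ |h″(ρ̄) R̄₁|. -/

import Mathlib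

noncomputable section
open MeasureTheory Real Set Filter

namespace DampedEuler

/-- Partial derivative in the first (time) variable. -/
def pd1 (f : ℝ → ℝ → ℝ) (τ y : ℝ) : ℝ := deriv (fun s => f s y) τ

/-- Partial derivative in the second (space) variable. -/
def pd2 (f : ℝ → ℝ → ℝ) (τ y : ℝ) : ℝ := deriv (f τ) y

/-- Smooth compactly supported test functions on `ℝ × ℝ`. -/
def IsTest (φ : ℝ → ℝ → ℝ) : Prop :=
  ContDiff ℝ (⊤ : ℕ∞) (fun q : ℝ × ℝ => φ q.1 q.2) ∧
  HasCompactSupport (fun q : ℝ × ℝ => φ q.1 q.2)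

/-- `C¹` compactly supported test functions on `ℝ`. -/
def IsTest1 (φ : ℝ → ℝ) : Prop := ContDiff ℝ 1 φ ∧ HasCompactSupport φ

/-- γ-law pressure. -/
def pGam (k γ : ℝ) (z : ℝ) : ℝ := k * z ^ γ

/-- Internal energy for the γ-law. -/
def hGam (k γ : ℝ) (z : ℝ) : ℝ :=
  if γ = 1 then k * z * Real.log z else k / (γ - 1) * z ^ γ

/-- Relative internal energy. -/
def hRel (h : ℝ → ℝ) (ρ ρb : ℝ) : ℝ := h ρ - h ρb - deriv h ρb * (ρ - ρb)

/-- Relative entropy density. -/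
def relEnt (h : ℝ → ℝ) (τ ρ n ρb nb : ℝ) : ℝ :=
  (1/2) * Real.exp (-τ) * ρ * (n / ρ - nb / ρb) ^ 2 + hRel h ρ ρb

/-- Relative entropy flux. -/
def relFlux (h : ℝ → ℝ) (τ ρ n ρb nb : ℝ) : ℝ :=
  (1/2) * Real.exp (-τ) * n * (n / ρ - nb / ρb) ^ 2
    + ρ * (deriv h ρ - deriv h ρb) * (n / ρ - nb / ρb)
    + nb / ρb * hRel h ρ ρb

/-- Total relative entropy. -/
def totE (h : ℝ → ℝ) (τ : ℝ) (ρ n ρb nb : ℝ → ℝ) : ℝ :=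
  ∫ y : ℝ, relEnt h τ (ρ y) (n y) (ρb y) (nb y)

/-- Finiteness of the total relative entropy. -/
def totEFin (h : ℝ → ℝ) (τ : ℝ) (ρ n ρb nb : ℝ → ℝ) : Prop :=
  Integrable (fun y : ℝ => relEnt h τ (ρ y) (n y) (ρb y) (nb y))

/-- The step function `ρ̂`. -/
def rhoHat (ρm ρp : ℝ) (y : ℝ) : ℝ := if y < 0 then ρm else ρp

/-- Entropy density. -/
def entFn (h : ℝ → ℝ) (τ ρ n : ℝ) : ℝ := Real.exp (-τ) * n ^ 2 / (2 * ρ) + h ρ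

/-- Entropy flux. -/
def entFlux (h : ℝ → ℝ) (τ ρ n : ℝ) : ℝ :=
  Real.exp (-τ) * n ^ 3 / (2 * ρ ^ 2) + n * deriv h ρ

/-- Weak solution of the scaled damped Euler system. -/
structure IsWeakSol (p : ℝ → ℝ) (α : ℝ) (ρ n : ℝ → ℝ → ℝ) (ρ₀ n₀ : ℝ → ℝ) : Prop where
  loc_rho : LocallyIntegrableOn (fun q : ℝ × ℝ => ρ q.1 q.2) (Ici 0 ×ˢ univ)
  loc_n : LocallyIntegrableOn (fun q : ℝ × ℝ => n q.1 q.2) (Ici 0 ×ˢ univ)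
  loc_kin : LocallyIntegrableOn (fun q : ℝ × ℝ => (n q.1 q.2) ^ 2 / ρ q.1 q.2) (Ici 0 ×ˢ univ)
  loc_p : LocallyIntegrableOn (fun q : ℝ × ℝ => p (ρ q.1 q.2)) (Ici 0 ×ˢ univ)
  rho_nonneg : ∀ᵐ q : ℝ × ℝ ∂(volume.restrict ((Ici 0) ×ˢ univ)), 0 ≤ ρ q.1 q.2
  mass_eq : ∀ φ : ℝ → ℝ → ℝ, IsTest φ →
    -(∫ τ in Ioi (0:ℝ), ∫ y : ℝ,
        (pd1 φ τ y * ρ τ y + pd2 φ τ y * (-(y / 2) * ρ τ y + n τ y)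
          - (1/2) * φ τ y * ρ τ y))
      = ∫ y : ℝ, φ 0 y * ρ₀ y
  mom_eq : ∀ ψ : ℝ → ℝ → ℝ, IsTest ψ →
    -(∫ τ in Ioi (0:ℝ), ∫ y : ℝ,
        (pd1 ψ τ y * n τ y
          + pd2 ψ τ y * (-(y / 2) * n τ y + (n τ y) ^ 2 / ρ τ y + Real.exp τ * p (ρ τ y))
          - ψ τ y * Real.exp τ * α * n τ y))
      = ∫ y : ℝ, ψ 0 y * n₀ y

/-- Entropy condition (E1). -/
def CondE1 (h : ℝ → ℝ) (α : ℝ) (ρ n : ℝ → ℝ → ℝ) (ρ₀ n₀ : ℝ → ℝ) : Prop :=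
  (∀ T > (0:ℝ), ∃ M : ℝ, ∀ᵐ q : ℝ × ℝ, q.1 ∈ Icc 0 T →
      |ρ q.1 q.2| ≤ M ∧ |n q.1 q.2 / ρ q.1 q.2| ≤ M) ∧
  LocallyIntegrableOn (fun q : ℝ × ℝ => h (ρ q.1 q.2)) (Ici 0 ×ˢ univ) ∧
  ∀ χ : ℝ → ℝ → ℝ, IsTest χ → (∀ τ y, 0 ≤ χ τ y) →
    (∫ τ in Ioi (0:ℝ), ∫ y : ℝ,
        (-(pd1 χ τ y) * entFn h τ (ρ τ y) (n τ y)
          + pd2 χ τ y * (y / 2 * entFn h τ (ρ τ y) (n τ y) - entFlux h τ (ρ τ y) (n τ y))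
          + χ τ y * ((1/2) * entFn h τ (ρ τ y) (n τ y) + α * (n τ y) ^ 2 / ρ τ y)))
      ≤ ∫ y : ℝ, χ 0 y * entFn h 0 (ρ₀ y) (n₀ y)

/-- A smoothened version of the step function. -/
def IsRhoInf (ρm ρp : ℝ) (ρInf : ℝ → ℝ) : Prop :=
  ContDiff ℝ 1 ρInf ∧ ∃ R > (0:ℝ), (∀ y > R, ρInf y = ρp) ∧ ∀ y < -R, ρInf y = ρm

/-- Entropy condition (E2). -/
def CondE2 (h : ℝ → ℝ) (α ρm ρp : ℝ) (ρ n : ℝ → ℝ → ℝ) (ρ₀ n₀ : ℝ → ℝ) : Prop :=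
  ∃ ρInf : ℝ → ℝ, IsRhoInf ρm ρp ρInf ∧
    ∀ φ : ℝ → ℝ, IsTest1 φ → (∀ τ, 0 ≤ φ τ) →
      (∫ τ in Ioi (0:ℝ),
          (-(deriv φ τ) * totE h τ (ρ τ) (n τ) ρInf (fun _ => 0)
            + φ τ * ((1/2) * totE h τ (ρ τ) (n τ) ρInf (fun _ => 0)
              + ∫ y : ℝ, α * (n τ y) ^ 2 / ρ τ y)))
        ≤ φ 0 * totE h 0 ρ₀ n₀ ρInf (fun _ => 0)
          + ∫ τ in Ioi (0:ℝ), φ τ *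
              ∫ y : ℝ, deriv (fun z => deriv h (ρInf z)) y * (y / 2 * (ρ τ y - ρInf y) - n τ y)

/-- First residual. -/
def R1 (ρb nb : ℝ → ℝ → ℝ) (τ y : ℝ) : ℝ :=
  pd1 ρb τ y - y / 2 * pd2 ρb τ y + pd2 nb τ y

/-- Second residual. -/
def R2 (p : ℝ → ℝ) (α : ℝ) (ρb nb : ℝ → ℝ → ℝ) (τ y : ℝ) : ℝ :=
  pd1 nb τ y - y / 2 * pd2 nb τ y - (1/2) * nb τ y
    + pd2 (fun s z => (nb s z) ^ 2 / ρb s z) τ y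
    + Real.exp τ * (pd2 (fun s z => p (ρb s z)) τ y + α * nb τ y)

/-- Combined residual. -/
def Rbar (p : ℝ → ℝ) (α : ℝ) (ρb nb : ℝ → ℝ → ℝ) (τ y : ℝ) : ℝ :=
  nb τ y / ρb τ y * R1 ρb nb τ y - R2 p α ρb nb τ y

/-- Relative pressure. -/
def pRel (p : ℝ → ℝ) (ρ ρb : ℝ) : ℝ := p ρ - p ρb - deriv p ρb * (ρ - ρb)

/-- Error term `ξ₁`. -/
def xi1 (p : ℝ → ℝ) (ρ n ρb nb : ℝ → ℝ → ℝ) (τ y : ℝ) : ℝ :=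
  -(pd2 (fun s z => nb s z / ρb s z) τ y) *
    (Real.exp (-τ) * ρ τ y * (n τ y / ρ τ y - nb τ y / ρb τ y) ^ 2
      + pRel p (ρ τ y) (ρb τ y))

/-- Error term `ξ₂`. -/
def xi2 (p : ℝ → ℝ) (α : ℝ) (ρ n ρb nb : ℝ → ℝ → ℝ) (τ y : ℝ) : ℝ :=
  Real.exp (-τ) * Rbar p α ρb nb τ y * (ρ τ y / ρb τ y)
    * (n τ y / ρ τ y - nb τ y / ρb τ y)

/-- Error term `ξ₃`. -/
def xi3 (h : ℝ → ℝ) (ρ ρb nb : ℝ → ℝ → ℝ) (τ y : ℝ) : ℝ :=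
  -(ρ τ y - ρb τ y) * deriv (deriv h) (ρb τ y) * R1 ρb nb τ y

/-- Total error term `ξ = ξ₁ + ξ₂ + ξ₃`. -/
def xiTot (h p : ℝ → ℝ) (α : ℝ) (ρ n ρb nb : ℝ → ℝ → ℝ) (τ y : ℝ) : ℝ :=
  xi1 p ρ n ρb nb τ y + xi2 p α ρ n ρb nb τ y + xi3 h ρ ρb nb τ y

/-- Integrated error term `Ξ`. -/
def Xi (h p : ℝ → ℝ) (α : ℝ) (ρ n ρb nb : ℝ → ℝ → ℝ) (τ : ℝ) : ℝ :=
  ∫ y : ℝ, xiTot h p α ρ n ρb nb τ y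

/-- Frictional dissipation term `D_α`. -/
def Dalpha (α : ℝ) (ρ n ρb nb : ℝ → ℝ) : ℝ :=
  α * ∫ y : ℝ, ρ y * (n y / ρ y - nb y / ρb y) ^ 2

/-- Regularity of the reference pair: `C¹` on `(0,∞)×ℝ` and continuous on `[0,∞)×ℝ`. -/
def RefReg (ρb nb : ℝ → ℝ → ℝ) : Prop :=
  ContDiffOn ℝ 1 (fun q : ℝ × ℝ => ρb q.1 q.2) (Ioi 0 ×ˢ univ) ∧
  ContDiffOn ℝ 1 (fun q : ℝ × ℝ => nb q.1 q.2) (Ioi 0 ×ˢ univ) ∧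
  ContinuousOn (fun q : ℝ × ℝ => ρb q.1 q.2) (Ici 0 ×ˢ univ) ∧
  ContinuousOn (fun q : ℝ × ℝ => nb q.1 q.2) (Ici 0 ×ˢ univ)

/-- Membership in `L^∞_loc([0,∞); L¹(ℝ) ∩ L^∞(ℝ))`. -/
def LinfLocL1Linf (f : ℝ → ℝ → ℝ) : Prop :=
  ∀ T > (0:ℝ), ∃ M : ℝ, ∀ τ ∈ Icc (0:ℝ) T,
    Integrable (f τ) ∧ (∫ y : ℝ, |f τ y|) ≤ M ∧ ∀ y, |f τ y| ≤ M

/-- The improved pressure condition `(eq:pres.better)`. -/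
def PresBetter (p : ℝ → ℝ) : Prop :=
  (∃ c > (0:ℝ), ∀ z > (0:ℝ), deriv p z ≤ c * p z / z) ∧
  IntegrableOn (fun z => p z / z ^ 2) (Ioc (0:ℝ) 1)

/-- The global relative entropy inequality `(eq:relent.total.weak)`. -/
def RelEntIneq (h p : ℝ → ℝ) (α : ℝ) (ρ n ρb nb : ℝ → ℝ → ℝ) (ρ₀ n₀ : ℝ → ℝ) : Prop :=
  ∀ φ : ℝ → ℝ, IsTest1 φ → (∀ τ, 0 ≤ φ τ) →
    (∫ τ in Ioi (0:ℝ),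
        (-(deriv φ τ) * totE h τ (ρ τ) (n τ) (ρb τ) (nb τ)
          + φ τ * ((1/2) * totE h τ (ρ τ) (n τ) (ρb τ) (nb τ)
            + Dalpha α (ρ τ) (n τ) (ρb τ) (nb τ))))
      ≤ φ 0 * totE h 0 ρ₀ n₀ (ρb 0) (nb 0)
        + ∫ τ in Ioi (0:ℝ), φ τ * Xi h p α ρ n ρb nb τ


/-! Writing `x = r / b`, the relative internal energy is `k b ^ (γ - 1) (r ℓ - (r - b))`, where `ℓ`
is the secant slope of `s ↦ x ^ s` between `0` and `γ - 1`, with the tangent slope `log x` when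
`γ = 1`. Since `s ↦ x ^ s` is convex, `ℓ` increases with `γ`, and at `γ = 1 / 2` the factor
`r ℓ - (r - b)` is exactly `(√r - √b) ^ 2`. This square in turn controls `|r - b|`. -/

lemma monotoneOn_dslope_of_convexOn {S : Set ℝ} {f : ℝ → ℝ} {a : ℝ} (hf : ConvexOn ℝ S f)
    (ha : a ∈ S) (hfa : DifferentiableAt ℝ f a) : MonotoneOn (dslope f a) S := by
  intro s hs t ht hst
  rcases hst.eq_or_lt with rfl | hlt
  · rfl
  rcases eq_or_ne s a with rfl | hsa
  · rw [dslope_same, dslope_of_ne _ hlt.ne']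
    exact hf.deriv_le_slope hs ht hlt hfa
  rcases eq_or_ne t a with rfl | hta
  · rw [dslope_same, dslope_of_ne _ hsa, slope_comm]
    exact hf.slope_le_deriv hs ht hlt hfa
  · rw [dslope_of_ne _ hsa, dslope_of_ne _ hta]
    exact hf.slope_mono ha ⟨hs, hsa⟩ ⟨ht, hta⟩ hst

lemma two_mul_one_sub_inv_sqrt_le_dslope_const_rpow {x s : ℝ} (hx : 0 < x) (hs : -(1 / 2) ≤ s) :
    2 * (1 - (√x)⁻¹) ≤ dslope (fun t : ℝ => x ^ t) 0 s := by
  have slope_neg_half : dslope (fun t : ℝ => x ^ t) 0 (-(1 / 2)) = 2 * (1 - (√x)⁻¹) := by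
    rw [dslope_of_ne _ (by norm_num), slope_def_field, Real.rpow_neg hx.le, ← Real.sqrt_eq_rpow,
      Real.rpow_zero]
    ring
  rw [← slope_neg_half]
  exact monotoneOn_dslope_of_convexOn (convexOn_rpow_left hx) (mem_univ 0)
    (Real.hasStrictDerivAt_const_rpow hx 0).hasDerivAt.differentiableAt
    (mem_univ _) (mem_univ _) hs

lemma hGam_one (k z : ℝ) : hGam k 1 z = k * (z * Real.log z) := by
  rw [hGam, if_pos rfl, mul_assoc]

lemma hGam_of_ne_one (k : ℝ) {γ : ℝ} (hγ : γ ≠ 1) (z : ℝ) :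
    hGam k γ z = k / (γ - 1) * z ^ γ :=
  if_neg hγ

lemma deriv_hGam_one (k : ℝ) {z : ℝ} (hz : z ≠ 0) :
    deriv (hGam k 1) z = k * (Real.log z + 1) := by
  rw [funext (hGam_one k)]
  exact ((Real.hasDerivAt_mul_log hz).const_mul k).deriv

lemma deriv_hGam_of_ne_one (k : ℝ) {γ z : ℝ} (hγ : γ ≠ 1) (hz : z ≠ 0) :
    deriv (hGam k γ) z = k / (γ - 1) * (γ * z ^ (γ - 1)) := by
  rw [funext (hGam_of_ne_one k hγ)]
  exact ((Real.hasDerivAt_rpow_const (Or.inl hz)).const_mul _).deriv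

lemma deriv_deriv_hGam (k γ : ℝ) {z : ℝ} (hz : z ≠ 0) :
    deriv (deriv (hGam k γ)) z = k * γ * (z ^ (γ - 1) / z) := by
  by_cases hγ : γ = 1
  · subst hγ
    have deriv_near : deriv (hGam k 1) =ᶠ[nhds z] fun w => k * (Real.log w + 1) := by
      filter_upwards [eventually_ne_nhds hz] with w hw using deriv_hGam_one k hw
    rw [deriv_near.deriv_eq, (((Real.hasDerivAt_log hz).add_const 1).const_mul k).deriv, sub_self,
      Real.rpow_zero, mul_one, one_div]
  · have deriv_near :
        deriv (hGam k γ) =ᶠ[nhds z] fun w => k / (γ - 1) * (γ * w ^ (γ - 1)) := by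
      filter_upwards [eventually_ne_nhds hz] with w hw using deriv_hGam_of_ne_one k hγ hw
    have hγ' : γ - 1 ≠ 0 := sub_ne_zero.mpr hγ
    rw [deriv_near.deriv_eq,
      (((Real.hasDerivAt_rpow_const (Or.inl hz)).const_mul γ).const_mul _).deriv,
      Real.rpow_sub_one hz (γ - 1)]
    field_simp

lemma hRel_hGam_eq_dslope (k γ : ℝ) {r b : ℝ} (hr : 0 < r) (hb : 0 < b) :
    hRel (hGam k γ) r b =
      k * b ^ (γ - 1) * (r * dslope (fun s : ℝ => (r / b) ^ s) 0 (γ - 1) - (r - b)) := by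
  by_cases hγ : γ = 1
  · subst hγ
    rw [hRel, deriv_hGam_one k hb.ne', hGam_one, hGam_one, sub_self, dslope_same,
      (Real.hasStrictDerivAt_const_rpow (div_pos hr hb) 0).hasDerivAt.deriv,
      Real.log_div hr.ne' hb.ne', Real.rpow_zero, Real.rpow_zero]
    ring
  · have hγ' : γ - 1 ≠ 0 := sub_ne_zero.mpr hγ
    have hbγ : b ^ (γ - 1) ≠ 0 := (Real.rpow_pos_of_pos hb _).ne'
    have rpow_split {x : ℝ} (hx : 0 < x) : x ^ γ = x * x ^ (γ - 1) := by
      rw [Real.rpow_sub_one hx.ne', mul_div_cancel₀ _ hx.ne']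
    rw [hRel, deriv_hGam_of_ne_one k hγ hb.ne', hGam_of_ne_one k hγ,
      hGam_of_ne_one k hγ, dslope_of_ne _ hγ', slope_def_field, Real.div_rpow hr.le hb.le,
      Real.rpow_zero, rpow_split hr, rpow_split hb]
    field_simp
    ring

lemma hRel_hGam_zero_left (k : ℝ) {γ b : ℝ} (hγ : γ ≠ 0) (hb : 0 < b) :
    hRel (hGam k γ) 0 b = k * b ^ (γ - 1) * b := by
  by_cases hγ1 : γ = 1
  · subst hγ1
    rw [hRel, deriv_hGam_one k hb.ne', hGam_one, hGam_one, sub_self, Real.rpow_zero]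
    ring
  · have hγ' : γ - 1 ≠ 0 := sub_ne_zero.mpr hγ1
    rw [hRel, deriv_hGam_of_ne_one k hγ1 hb.ne', hGam_of_ne_one k hγ1,
      hGam_of_ne_one k hγ1, Real.zero_rpow hγ, Real.rpow_sub_one hb.ne']
    field_simp
    ring

lemma mul_sq_sqrt_sub_sqrt_le_hRel_hGam {k γ r b : ℝ} (hk : 0 ≤ k) (hγ : 1 / 2 ≤ γ)
    (hr : 0 ≤ r) (hb : 0 < b) :
    k * b ^ (γ - 1) * (√r - √b) ^ 2 ≤ hRel (hGam k γ) r b := by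
  rcases hr.eq_or_lt with rfl | hr
  · rw [hRel_hGam_zero_left k (by linarith) hb, Real.sqrt_zero, zero_sub, neg_sq,
      Real.sq_sqrt hb.le]
  rw [hRel_hGam_eq_dslope k γ hr hb]
  gcongr
  have hsr : √r ≠ 0 := (Real.sqrt_pos.mpr hr).ne'
  calc (√r - √b) ^ 2 = √r ^ 2 * (2 * (1 - √b / √r)) - (√r ^ 2 - √b ^ 2) := by field_simp; ring
    _ = r * (2 * (1 - (√(r / b))⁻¹)) - (r - b) := by
      rw [Real.sqrt_div hr.le, inv_div, Real.sq_sqrt hr.le, Real.sq_sqrt hb.le]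
    _ ≤ r * dslope (fun s : ℝ => (r / b) ^ s) 0 (γ - 1) - (r - b) := by
      gcongr
      exact two_mul_one_sub_inv_sqrt_le_dslope_const_rpow (div_pos hr hb) (by linarith)

lemma abs_sub_le_two_mul_sq_sqrt_sub_sqrt_add {r b : ℝ} (hr : 0 ≤ r) (hb : 0 ≤ b) :
    |r - b| ≤ 2 * (√r - √b) ^ 2 + b := by
  rw [abs_le]
  constructor
  · linarith [sq_nonneg (√r - √b)]
  · linarith [sq_nonneg (√r - 2 * √b), Real.sq_sqrt hr, Real.sq_sqrt hb]

/-- The range `1 / 2 ≤ γ` is optimal: at `r = 4 * b` equality holds for `γ = 1 / 2`, and the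
inequality fails for `0 < γ < 1 / 2` if `0 < k` and `R ≠ 0`. -/
theorem xi3_bound_general {k γ r b : ℝ} (hk : 0 ≤ k) (hγ : 1 / 2 ≤ γ) (hr : 0 ≤ r) (hb : 0 < b)
    (R : ℝ) :
    |-(r - b) * deriv (deriv (hGam k γ)) b * R|
      ≤ 2 * γ * |R| / b * hRel (hGam k γ) r b + b * |deriv (deriv (hGam k γ)) b * R| := by
  have : 0 ≤ γ := by linarith
  have abs_coeff : |deriv (deriv (hGam k γ)) b * R| = γ * |R| / b * (k * b ^ (γ - 1)) := by
    rw [deriv_deriv_hGam k γ hb.ne', abs_mul, abs_of_nonneg (by positivity)]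
    ring
  calc |-(r - b) * deriv (deriv (hGam k γ)) b * R|
      = |r - b| * |deriv (deriv (hGam k γ)) b * R| := by rw [mul_assoc, abs_mul, abs_neg]
    _ ≤ (2 * (√r - √b) ^ 2 + b) * |deriv (deriv (hGam k γ)) b * R| := by
      gcongr
      exact abs_sub_le_two_mul_sq_sqrt_sub_sqrt_add hr hb.le
    _ = 2 * γ * |R| / b * (k * b ^ (γ - 1) * (√r - √b) ^ 2)
          + b * |deriv (deriv (hGam k γ)) b * R| := by
      rw [add_mul, abs_coeff]
      ring
    _ ≤ 2 * γ * |R| / b * hRel (hGam k γ) r b + b * |deriv (deriv (hGam k γ)) b * R| := by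
      gcongr
      exact mul_sq_sqrt_sub_sqrt_le_hRel_hGam hk hγ hr hb

/-- **Bound for the error term `ξ₃`.** -/
theorem xi3_bound
    (k γ : ℝ) (hk : 0 < k) (hγ : 1 ≤ γ)
    (ρ n : ℝ → ℝ → ℝ)
    (hρloc : LocallyIntegrableOn (fun q : ℝ × ℝ => ρ q.1 q.2) (Ioi 0 ×ˢ univ))
    (hnloc : LocallyIntegrableOn (fun q : ℝ × ℝ => n q.1 q.2) (Ioi 0 ×ˢ univ))
    (hρpos : ∀ᵐ q : ℝ × ℝ ∂(volume.restrict (Ioi 0 ×ˢ univ)), 0 ≤ ρ q.1 q.2)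
    (ρb nb : ℝ → ℝ → ℝ)
    (hρbC1 : ContDiffOn ℝ 1 (fun q : ℝ × ℝ => ρb q.1 q.2) (Ioi 0 ×ˢ univ))
    (hnbC1 : ContDiffOn ℝ 1 (fun q : ℝ × ℝ => nb q.1 q.2) (Ioi 0 ×ˢ univ))
    (hρbinf : ∃ ε > (0:ℝ), ∀ τ y : ℝ, ε ≤ ρb τ y) :
    ∀ᵐ q : ℝ × ℝ ∂(volume.restrict (Ioi 0 ×ˢ univ)),
      |xi3 (hGam k γ) ρ ρb nb q.1 q.2|
        ≤ 2 * γ * |R1 ρb nb q.1 q.2| / ρb q.1 q.2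
            * hRel (hGam k γ) (ρ q.1 q.2) (ρb q.1 q.2)
          + ρb q.1 q.2 * |deriv (deriv (hGam k γ)) (ρb q.1 q.2) * R1 ρb nb q.1 q.2| := by
  obtain ⟨ε, hε, hle⟩ := hρbinf
  filter_upwards [hρpos] with q hρq using
    xi3_bound_general hk.le (by linarith) hρq (hε.trans_le (hle q.1 q.2)) (R1 ρb nb q.1 q.2)

end DampedEuler
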